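/- Let n ≥ 1, s ∈ (0,1), C₀ > 0, let Ω ⊂ ℝⁿ be a bounded open set, and let u : ℝⁿ → ℝ be bounded, Lipschitz, and twice continuously differentiable in Ω, with |D²u(x)| ≤ C₀·dist(x,∂Ω)^{−1} for all x ∈ Ω and |u(x)| ≤ C₀·dist(x,Ωᶜ) for all x ∈ ℝⁿ. Then 𝔤 = (−Δ)^{s/2}u is differentiable at every point of ℝⁿ∖∂Ω with ∇𝔤(x) = c_{n,s/2} ∫_{ℝⁿ} (∇u(x) − ∇u(x+z))/|z|^{n+s} dz there, and there is a constant C (depending on n, s, C₀ and ‖u‖_{C^{0,1}(ℝⁿ)}) such that sup_{x : dist(x,∂Ω) ≥ ϱ} |∇𝔤(x)| ≤ C·ϱ^{−s} for every ϱ ∈ (0,1). -/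

import Mathlib

open MeasureTheory Real Set Metric Bornology Filter
open scoped RealInnerProductSpace ENNReal NNReal Pointwise

noncomputable section

abbrev En (n : ℕ) : Type := EuclideanSpace ℝ (Fin n)

/-- The normalizing constant `c_{n,s}`. -/
def cK (n : ℕ) (s : ℝ) : ℝ :=
  s * (2 : ℝ) ^ (2 * s) * Real.Gamma (((n : ℝ) + 2 * s) / 2) /
    (Real.pi ^ ((n : ℝ) / 2) * Real.Gamma (1 - s))

/-- The fractional Laplacian `(-Δ)ˢ u (x)`. -/
def fracLap (n : ℕ) (s : ℝ) (u : En n → ℝ) (x : En n) : ℝ :=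
  (cK n s / 2) * ∫ y : En n, (2 * u x - u (x + y) - u (x - y)) / ‖y‖ ^ ((n : ℝ) + 2 * s)

/-- `(-Δ)^{s/2} u (x)`, defined via the non-symmetrized integral. -/
def fracHalf (n : ℕ) (s : ℝ) (u : En n → ℝ) (x : En n) : ℝ :=
  cK n (s / 2) * ∫ z : En n, (u x - u (x + z)) / ‖z‖ ^ ((n : ℝ) + s)

/-- The squared Gagliardo-type seminorm `[u]_s²`. -/
def seminormSsq (n : ℕ) (s : ℝ) (u : En n → ℝ) : ℝ :=
  (cK n s / 2) * ∫ p : En n × En n, (u p.1 - u p.2) ^ 2 / ‖p.1 - p.2‖ ^ ((n : ℝ) + 2 * s)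

/-- The squared seminorm `[u]₁² = ∫_Ω |∇u|²`. -/
def seminorm1sq (n : ℕ) (Ω : Set (En n)) (u : En n → ℝ) : ℝ :=
  ∫ x in Ω, ‖gradient u x‖ ^ 2

/-- The Laplacian as the trace of the Hessian. -/
def lap (n : ℕ) (u : En n → ℝ) (x : En n) : ℝ :=
  ∑ i : Fin n, fderiv ℝ (fun y => fderiv ℝ u y (EuclideanSpace.single i 1)) x
    (EuclideanSpace.single i 1)

/-- The Hessian `D²u(x)` as a continuous bilinear-type map; `‖hess n u x‖` is its operator
norm. -/
def hess (n : ℕ) (u : En n → ℝ) (x : En n) : En n →L[ℝ] En n →L[ℝ] ℝ :=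
  fderiv ℝ (fderiv ℝ u) x

/-- A bounded C² domain `Ω ⊆ ℝⁿ`: a bounded open connected set whose boundary is a C²
hypersurface, described by a global C² defining function with nonvanishing gradient
on the boundary. -/
structure C2Domain (n : ℕ) where
  carrier : Set (En n)
  phi : En n → ℝ
  phi_smooth : ContDiff ℝ 2 phi
  carrier_eq : carrier = {x | phi x < 0}
  grad_ne : ∀ x ∈ frontier carrier, gradient phi x ≠ 0
  bounded : IsBounded carrier
  connected : IsConnected carrier

/-- The outward unit normal `ν` on `∂Ω`. -/
def C2Domain.nu {n : ℕ} (D : C2Domain n) (x : En n) : En n :=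
  ‖gradient D.phi x‖⁻¹ • gradient D.phi x

/-- The normal derivative `∂u/∂ν` at a boundary point (the derivative from inside). -/
def normalDeriv {n : ℕ} (D : C2Domain n) (u : En n → ℝ) (x : En n) : ℝ :=
  fderivWithin ℝ u (closure D.carrier) x (D.nu x)

/-- `Ω` is strictly star-shaped with respect to `z₀`. -/
def C2Domain.StrictlyStarShapedAt {n : ℕ} (D : C2Domain n) (z₀ : En n) : Prop :=
  z₀ ∈ D.carrier ∧ ∀ x ∈ frontier D.carrier, 0 < ⟪x - z₀, D.nu x⟫

/-- `Ω` is strictly star-shaped. -/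
def C2Domain.StrictlyStarShaped {n : ℕ} (D : C2Domain n) : Prop :=
  ∃ z₀, D.StrictlyStarShapedAt z₀

/-- The Pohozaev boundary term `∫_{∂Ω} (∂u/∂ν)² (x·ν(x)) dS`, with `dS` the
`(n-1)`-dimensional Hausdorff measure on `∂Ω`. -/
def pohozaevBoundary {n : ℕ} (D : C2Domain n) (u : En n → ℝ) : ℝ :=
  ∫ x in frontier D.carrier, (normalDeriv D u x) ^ 2 * ⟪x, D.nu x⟫ ∂ μH[(n : ℝ) - 1]

/-- Condition (★). -/
def StarCond (n : ℕ) (s : ℝ) (Ω : Set (En n)) (u : En n → ℝ) : Prop :=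
  ∃ C > 0, ∃ γ ∈ Set.Ioo (0:ℝ) 1, ∀ x ∈ Ω,
    ‖hess n u x‖ ≤ C * infDist x (frontier Ω) ^ (γ - 1) ∧
    |u x| ≤ C * infDist x (frontier Ω) ∧
    |fracLap n s u x| ≤ C * (1 + (if s < 1/2 then 1 else 0)
      + (if s = 1/2 then |Real.log (infDist x (frontier Ω))| else 0)
      + (if 1/2 < s then infDist x (frontier Ω) ^ (1 - 2*s) else 0))

/-- The model kernel `min(|z|,1)/|z|^{n+s}`. -/
def kerG (n : ℕ) (s : ℝ) (z : En n) : ℝ := min ‖z‖ 1 * (‖z‖ ^ ((n : ℝ) + s))⁻¹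

lemma kerG_nonneg (n : ℕ) (s : ℝ) (z : En n) : 0 ≤ kerG n s z := by
  unfold kerG; positivity

lemma kerG_integrable (n : ℕ) (hn : 1 ≤ n) (s : ℝ) (hs : s ∈ Set.Ioo (0:ℝ) 1) :
    Integrable (kerG n s) := by
  have : Nonempty (Fin n) := ⟨⟨0, hn⟩⟩
  obtain ⟨hs0, hs1⟩ := hs
  have key := (integrable_fun_norm_addHaar (volume : Measure (En n))
    (f := fun r : ℝ => min r 1 * (r ^ ((n : ℝ) + s))⁻¹))
  refine key.2 ?_
  have hpow : ∀ r : ℝ, 0 < r → r ^ (Module.finrank ℝ (En n) - 1) * (r ^ ((n : ℝ) + s))⁻¹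
      = r ^ (-1 - s) := by
    intro r hr
    rw [finrank_euclideanSpace_fin, ← Real.rpow_natCast, ← Real.rpow_neg hr.le,
      ← Real.rpow_add hr]
    congr 1
    push_cast [Nat.cast_sub hn]
    ring
  rw [← Set.Ioc_union_Ioi_eq_Ioi (zero_le_one' ℝ)]
  refine IntegrableOn.union ?_ ?_
  · have h1 : IntegrableOn (fun r : ℝ => r ^ (-s)) (Set.Ioc 0 1) := by
      rw [← intervalIntegrable_iff_integrableOn_Ioc_of_le (zero_le_one' ℝ)]
      exact intervalIntegral.intervalIntegrable_rpow' (by linarith)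
    refine h1.congr_fun ?_ measurableSet_Ioc
    intro r hr
    have hr0 : 0 < r := hr.1
    simp only [smul_eq_mul]
    rw [min_eq_left hr.2, mul_left_comm, hpow r hr0]
    have : (-s) = 1 + (-1 - s) := by ring
    rw [this, Real.rpow_add hr0, Real.rpow_one]
  · have h1 : IntegrableOn (fun r : ℝ => r ^ (-1 - s)) (Set.Ioi 1) :=
      integrableOn_Ioi_rpow_of_lt (by linarith) zero_lt_one
    refine h1.congr_fun ?_ measurableSet_Ioi
    intro r hr
    have hr1 : 1 < r := hr
    simp only [smul_eq_mul]
    rw [min_eq_right hr1.le, one_mul, hpow r (by linarith)]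

lemma kerG_scale (n : ℕ) (s d : ℝ) (hd : 0 < d) (z : En n) :
    min (‖z‖ / d) 1 * (‖z‖ ^ ((n : ℝ) + s))⁻¹
      = (d ^ ((n : ℝ) + s))⁻¹ * kerG n s (d⁻¹ • z) := by
  unfold kerG
  have h1 : ‖d⁻¹ • z‖ = ‖z‖ / d := by
    rw [norm_smul, Real.norm_of_nonneg (by positivity)]; field_simp
  rw [h1, Real.div_rpow (norm_nonneg _) hd.le]
  have : d ^ ((n : ℝ) + s) ≠ 0 := (Real.rpow_pos_of_pos hd _).ne'
  rw [inv_div]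
  field_simp

lemma kerG_scale_integrable (n : ℕ) (hn : 1 ≤ n) (s : ℝ) (hs : s ∈ Set.Ioo (0:ℝ) 1)
    (d : ℝ) (hd : 0 < d) :
    Integrable (fun z : En n => min (‖z‖ / d) 1 * (‖z‖ ^ ((n : ℝ) + s))⁻¹) := by
  simp_rw [kerG_scale n s d hd]
  exact ((integrable_comp_smul_iff volume (kerG n s) (inv_ne_zero hd.ne')).2
    (kerG_integrable n hn s hs)).const_mul _

lemma kerG_scale_integral (n : ℕ) (s d : ℝ) (hd : 0 < d) :
    ∫ z : En n, min (‖z‖ / d) 1 * (‖z‖ ^ ((n : ℝ) + s))⁻¹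
      = d ^ (-s) * ∫ z, kerG n s z := by
  simp_rw [kerG_scale n s d hd]
  rw [integral_const_mul, Measure.integral_comp_smul, finrank_euclideanSpace_fin, smul_eq_mul,
    ← mul_assoc]
  congr 1
  rw [inv_pow, inv_inv, abs_of_pos (by positivity), Real.rpow_add hd, Real.rpow_natCast,
    Real.rpow_neg hd.le]
  field_simp

/-- Lipschitz bound of the increments. -/
lemma incr_lip (n : ℕ) (u : En n → ℝ) (L : ℝ≥0) (hL : LipschitzWith L u) (K d : ℝ)
    (hK : 0 ≤ K) (hd : 0 < d) (x : En n)
    (h1 : ∀ y ∈ ball x (d / 2), DifferentiableAt ℝ u y)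
    (h2 : ∀ y ∈ ball x (d / 2), DifferentiableAt ℝ (fderiv ℝ u) y)
    (h3 : ∀ y ∈ ball x (d / 2), ‖hess n u y‖ ≤ K / d) (z : En n)
    (a : En n) (ha : a ∈ ball x (d / 4)) (b : En n) (hb : b ∈ ball x (d / 4)) :
    |(u a - u (a + z)) - (u b - u (b + z))| ≤ (K + 8 * L) * min (‖z‖ / d) 1 * ‖a - b‖ := by
  have hL0 : (0 : ℝ) ≤ L := L.2
  by_cases hz : ‖z‖ < d / 4
  · have hsub : ∀ w ∈ ball x (d / 4), w ∈ ball x (d / 2) ∧ w + z ∈ ball x (d / 2) := by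
      intro w hw
      rw [mem_ball, dist_eq_norm] at hw
      refine ⟨by rw [mem_ball, dist_eq_norm]; linarith, ?_⟩
      rw [mem_ball, dist_eq_norm]
      have : w + z - x = (w - x) + z := by abel
      rw [this]
      linarith [norm_add_le (w - x) z]
    have hder : ∀ w ∈ ball x (d / 4), HasFDerivWithinAt (fun w => u w - u (w + z))
        (fderiv ℝ u w - fderiv ℝ u (w + z)) (ball x (d / 4)) w := by
      intro w hw
      obtain ⟨e1, e2⟩ := hsub w hw
      have := (hasFDerivAt_comp_add_right z).2 (h1 _ e2).hasFDerivAt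
      exact ((h1 _ e1).hasFDerivAt.sub this).hasFDerivWithinAt
    have hbd : ∀ w ∈ ball x (d / 4), ‖fderiv ℝ u w - fderiv ℝ u (w + z)‖ ≤ K / d * ‖z‖ := by
      intro w hw
      obtain ⟨e1, e2⟩ := hsub w hw
      have := (convex_ball x (d / 2)).norm_image_sub_le_of_norm_fderiv_le (𝕜 := ℝ)
        h2 h3 e2 e1
      simpa using this
    have := (convex_ball x (d / 4)).norm_image_sub_le_of_norm_hasFDerivWithin_le hder hbd hb ha
    rw [Real.norm_eq_abs] at this
    refine this.trans (mul_le_mul_of_nonneg_right ?_ (norm_nonneg _))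
    have hle : ‖z‖ / d ≤ 1 := by rw [div_le_one hd]; linarith
    rw [min_eq_left hle]
    have : K / d * ‖z‖ = K * (‖z‖ / d) := by ring
    rw [this]
    gcongr
    linarith
  · have e1 : |u a - u b| ≤ L * ‖a - b‖ := by
      simpa [Real.dist_eq, dist_eq_norm] using hL.dist_le_mul a b
    have e2 : |u (a + z) - u (b + z)| ≤ L * ‖a - b‖ := by
      simpa [Real.dist_eq, dist_eq_norm] using hL.dist_le_mul (a + z) (b + z)
    have e3 : (1 / 4 : ℝ) ≤ min (‖z‖ / d) 1 := by
      refine le_min ?_ (by norm_num)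
      rw [le_div_iff₀ hd]; linarith
    have e4 : |(u a - u (a + z)) - (u b - u (b + z))| ≤ 2 * L * ‖a - b‖ := by
      have : (u a - u (a + z)) - (u b - u (b + z)) = (u a - u b) - (u (a + z) - u (b + z)) := by
        ring
      rw [this]
      linarith [abs_sub (u a - u b) (u (a + z) - u (b + z))]
    refine e4.trans (mul_le_mul_of_nonneg_right ?_ (norm_nonneg _))
    nlinarith

lemma core (n : ℕ) (hn : 1 ≤ n) (s : ℝ) (hs : s ∈ Set.Ioo (0:ℝ) 1) (M : ℝ)
    (u : En n → ℝ) (hM : ∀ x, |u x| ≤ M) (L : ℝ≥0) (hL : LipschitzWith L u) (K d : ℝ)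
    (hK : 0 ≤ K) (hd : 0 < d) (x : En n)
    (h1 : ∀ y ∈ ball x (d / 2), DifferentiableAt ℝ u y)
    (h2 : ∀ y ∈ ball x (d / 2), DifferentiableAt ℝ (fderiv ℝ u) y)
    (h3 : ∀ y ∈ ball x (d / 2), ‖hess n u y‖ ≤ K / d) :
    HasGradientAt (fracHalf n s u)
          (cK n (s / 2) •
            ∫ z : En n, (‖z‖ ^ ((n : ℝ) + s))⁻¹ • (gradient u x - gradient u (x + z))) x ∧
    ‖gradient (fracHalf n s u) x‖ ≤
      |cK n (s / 2)| * ((K + 8 * L) * (d ^ (-s) * ∫ z, kerG n s z)) := by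
  have hL0 : (0 : ℝ) ≤ L := L.2
  have hM0 : 0 ≤ M := (abs_nonneg _).trans (hM 0)
  set B : En n → ℝ := fun z => (K + 8 * L) * (min (‖z‖ / d) 1 * (‖z‖ ^ ((n : ℝ) + s))⁻¹) with hB
  have hB0 : ∀ z, 0 ≤ B z := fun z => by simp only [hB]; positivity
  have hBint : Integrable B := (kerG_scale_integrable n hn s hs d hd).const_mul _
  set F : En n → En n → ℝ := fun w z => (u w - u (w + z)) / ‖z‖ ^ ((n : ℝ) + s) with hF
  set F' : En n → En n →L[ℝ] ℝ := fun z =>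
    (‖z‖ ^ ((n : ℝ) + s))⁻¹ • (fderiv ℝ u x - fderiv ℝ u (x + z)) with hF'
  have hnhds : ball x (d / 4) ∈ nhds x := ball_mem_nhds x (by positivity)
  have hu : Continuous u := hL.continuous
  have hFm : ∀ w, AEStronglyMeasurable (F w) volume := by
    intro w
    have : Measurable (F w) := by
      have e1 : Measurable (fun z => u w - u (w + z)) := by
        apply Continuous.measurable; fun_prop
      have e2 : Measurable (fun z : En n => ‖z‖ ^ ((n : ℝ) + s)) := by fun_prop
      exact e1.div e2
    exact this.aestronglyMeasurable
  have hFint : Integrable (F x) volume := by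
    refine Integrable.mono' ((kerG_integrable n hn s hs).const_mul (L + 2 * M)) (hFm x) ?_
    refine Eventually.of_forall fun z => ?_
    simp only [hF, kerG]
    rw [Real.norm_eq_abs, abs_div, abs_of_nonneg (a := ‖z‖ ^ _) (by positivity), div_eq_mul_inv,
      ← mul_assoc]
    gcongr
    rcases le_total ‖z‖ 1 with h | h
    · rw [min_eq_left h]
      have : |u x - u (x + z)| ≤ L * ‖z‖ := by
        simpa [Real.dist_eq, dist_eq_norm] using hL.dist_le_mul x (x + z)
      nlinarith [norm_nonneg z]
    · rw [min_eq_right h]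
      linarith [abs_sub (u x) (u (x + z)), hM x, hM (x + z)]
  have hF'm : AEStronglyMeasurable F' volume := by
    have e1 : Measurable (fun z => fderiv ℝ u x - fderiv ℝ u (x + z)) :=
      measurable_const.sub ((measurable_fderiv ℝ u).comp (measurable_const_add x))
    have e2 : Measurable (fun z : En n => (‖z‖ ^ ((n : ℝ) + s))⁻¹) := by fun_prop
    exact (e2.smul e1).aestronglyMeasurable
  have hlip : ∀ z, LipschitzOnWith (Real.nnabs (B z)) (F · z) (ball x (d / 4)) := by
    intro z
    refine LipschitzOnWith.of_dist_le_mul ?_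
    intro a ha b hb
    rw [Real.dist_eq, dist_eq_norm, Real.coe_nnabs, abs_of_nonneg (hB0 z)]
    simp only [hF, hB]
    rw [← sub_div, abs_div, abs_of_nonneg (a := ‖z‖ ^ _) (by positivity), div_eq_mul_inv]
    calc _ ≤ ((K + 8 * L) * min (‖z‖ / d) 1 * ‖a - b‖) * (‖z‖ ^ ((n : ℝ) + s))⁻¹ := by
          gcongr
          exact incr_lip n u L hL K d hK hd x h1 h2 h3 z a ha b hb
      _ = _ := by ring
  have hx : DifferentiableAt ℝ u x := h1 x (mem_ball_self (by positivity))
  have hae : ∀ᵐ z : En n, DifferentiableAt ℝ u (x + z) :=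
    (measurePreserving_add_left volume x).quasiMeasurePreserving.ae
      (hL.ae_differentiableAt (μ := volume))
  have hdiff : ∀ᵐ z : En n, HasFDerivAt (F · z) (F' z) x := by
    filter_upwards [hae] with z hz
    have e := hx.hasFDerivAt.sub ((hasFDerivAt_comp_add_right z).2 hz.hasFDerivAt)
    have e' := e.mul_const (‖z‖ ^ ((n : ℝ) + s))⁻¹
    simpa [hF, hF', div_eq_mul_inv] using e'
  obtain ⟨hI, hmain⟩ := hasFDerivAt_integral_of_dominated_loc_of_lip (μ := volume) hnhds
    (Eventually.of_forall hFm) hFint hF'm (Eventually.of_forall hlip) hBint hdiff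
  have hgrad : ∀ z, (InnerProductSpace.toDual ℝ (En n)).symm (F' z)
      = (‖z‖ ^ ((n : ℝ) + s))⁻¹ • (gradient u x - gradient u (x + z)) := by
    intro z
    simp [hF', gradient]
  have hIg : Integrable (fun z : En n =>
      (‖z‖ ^ ((n : ℝ) + s))⁻¹ • (gradient u x - gradient u (x + z))) := by
    simp_rw [← hgrad]
    refine (hI.norm.mono' ?_ ?_)
    · exact (InnerProductSpace.toDual ℝ (En n)).symm.continuous.comp_aestronglyMeasurable hF'm
    · exact Eventually.of_forall fun z => by simp
  have hdual : (InnerProductSpace.toDual ℝ (En n)) (cK n (s / 2) •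
        ∫ z : En n, (‖z‖ ^ ((n : ℝ) + s))⁻¹ • (gradient u x - gradient u (x + z)))
      = cK n (s / 2) • ∫ z, F' z := by
    ext v
    rw [InnerProductSpace.toDual_apply_apply, smul_apply,
      ContinuousLinearMap.integral_apply hI, real_inner_smul_left, real_inner_comm,
      ← integral_inner hIg, smul_eq_mul]
    congr 2
    ext z
    rw [← hgrad, real_inner_comm, InnerProductSpace.toDual_symm_apply]
  have hG : HasGradientAt (fracHalf n s u)
          (cK n (s / 2) •
            ∫ z : En n, (‖z‖ ^ ((n : ℝ) + s))⁻¹ • (gradient u x - gradient u (x + z))) x := by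
    rw [hasGradientAt_iff_hasFDerivAt, hdual]
    exact hmain.const_mul (cK n (s / 2))
  refine ⟨hG, ?_⟩
  rw [hG.gradient, ← (InnerProductSpace.toDual ℝ (En n)).norm_map, hdual, norm_smul,
    Real.norm_eq_abs, ← kerG_scale_integral n s d hd, ← integral_const_mul]
  gcongr
  refine norm_integral_le_of_norm_le hBint ?_
  filter_upwards [hdiff] with z hz
  have := hz.le_of_lipschitzOn hnhds (hlip z)
  rwa [Real.coe_nnabs, abs_of_nonneg (hB0 z)] at this

/-- Lemma 2.3, differentiation of `𝔤 = (-Δ)^{s/2}u` off `∂Ω` and the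
gradient bound `|∇𝔤| ≲ ϱ^{-s}` on `{dist(·,∂Ω) ≥ ϱ}`. -/
theorem fracHalf_gradient_bound (n : ℕ) (hn : 1 ≤ n) (s C₀ M : ℝ) (L : ℝ≥0)
    (hs : s ∈ Set.Ioo (0:ℝ) 1) (hC₀ : 0 < C₀) :
    ∃ C > (0:ℝ), ∀ (Ω : Set (En n)) (u : En n → ℝ),
      IsOpen Ω → IsBounded Ω →
      (∀ x, |u x| ≤ M) → LipschitzWith L u → ContDiffOn ℝ 2 u Ω →
      (∀ x ∈ Ω, ‖hess n u x‖ ≤ C₀ * (infDist x (frontier Ω))⁻¹) →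
      (∀ x, |u x| ≤ C₀ * infDist x Ωᶜ) →
      (∀ x, x ∉ frontier Ω →
        HasGradientAt (fracHalf n s u)
          (cK n (s / 2) •
            ∫ z : En n, (‖z‖ ^ ((n : ℝ) + s))⁻¹ • (gradient u x - gradient u (x + z))) x) ∧
      ∀ ϱ ∈ Set.Ioo (0:ℝ) 1, ∀ x : En n, ϱ ≤ infDist x (frontier Ω) →
        ‖gradient (fracHalf n s u) x‖ ≤ C * ϱ ^ (-s) := by
  have : Nonempty (Fin n) := ⟨⟨0, hn⟩⟩
  have hL0 : (0 : ℝ) ≤ L := L.2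
  have hI0 : 0 ≤ ∫ z, kerG n s z := integral_nonneg (kerG_nonneg n s)
  refine ⟨|cK n (s / 2)| * ((2 * C₀ + 8 * L) * ∫ z, kerG n s z) + 1, by positivity, ?_⟩
  intro Ω u hΩ hbdd hM hL hC2 hH hdist
  have hzero : ∀ y, y ∉ Ω → u y = 0 := by
    intro y hy
    have := hdist y
    rw [infDist_zero_of_mem (show y ∈ Ωᶜ from hy), mul_zero] at this
    exact abs_nonpos_iff.1 this
  -- local regularity away from the frontier
  have hreg : ∀ y, y ∉ frontier Ω → DifferentiableAt ℝ u y ∧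
      DifferentiableAt ℝ (fderiv ℝ u) y ∧ ‖hess n u y‖ ≤ C₀ * (infDist y (frontier Ω))⁻¹ := by
    intro y hy
    by_cases hyΩ : y ∈ Ω
    · have hc : ContDiffAt ℝ 2 u y := hC2.contDiffAt (hΩ.mem_nhds hyΩ)
      refine ⟨hc.differentiableAt (by norm_num), ?_, hH y hyΩ⟩
      exact (hc.fderiv_right (m := 1) (by norm_num)).differentiableAt (by norm_num)
    · have hcl : y ∉ closure Ω := by
        intro h
        apply hy
        rw [hΩ.frontier_eq]
        exact ⟨h, hyΩ⟩
      have hev : u =ᶠ[nhds y] fun _ => (0 : ℝ) := by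
        filter_upwards [isClosed_closure.isOpen_compl.mem_nhds hcl] with w hw
        exact hzero w fun h => hw (subset_closure h)
      have hev' : fderiv ℝ u =ᶠ[nhds y] fun _ => (0 : En n →L[ℝ] ℝ) := by
        filter_upwards [hev.fderiv (𝕜 := ℝ)] with w hw
        rw [hw]
        simp
      refine ⟨(differentiableAt_const (0 : ℝ)).congr_of_eventuallyEq hev,
        (differentiableAt_const (0 : En n →L[ℝ] ℝ)).congr_of_eventuallyEq hev', ?_⟩
      have : ‖hess n u y‖ = 0 := by
        unfold hess
        rw [hev'.fderiv_eq, fderiv_fun_const]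
        exact norm_zero (E := En n →L[ℝ] En n →L[ℝ] ℝ)
      rw [this]
      have := infDist_nonneg (x := y) (s := frontier Ω)
      positivity
  have hloc : (frontier Ω).Nonempty → ∀ x, 0 < infDist x (frontier Ω) →
      ∀ y ∈ ball x (infDist x (frontier Ω) / 2), DifferentiableAt ℝ u y ∧
      DifferentiableAt ℝ (fderiv ℝ u) y ∧ ‖hess n u y‖ ≤ 2 * C₀ / infDist x (frontier Ω) := by
    intro hne x hx y hy
    rw [mem_ball, dist_comm] at hy
    have e1 : infDist x (frontier Ω) ≤ infDist y (frontier Ω) + dist x y :=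
      infDist_le_infDist_add_dist
    have e2 : infDist x (frontier Ω) / 2 ≤ infDist y (frontier Ω) := by linarith
    have hyf : y ∉ frontier Ω := by
      intro h
      rw [infDist_zero_of_mem h] at e2
      linarith
    obtain ⟨a, b, c⟩ := hreg y hyf
    refine ⟨a, b, c.trans ?_⟩
    have : 2 * C₀ / infDist x (frontier Ω) = C₀ * (infDist x (frontier Ω) / 2)⁻¹ := by
      field_simp
    rw [this]
    gcongr
  refine ⟨?_, ?_⟩
  · intro x hx
    by_cases hne : (frontier Ω).Nonempty
    · have hd : 0 < infDist x (frontier Ω) :=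
        (isClosed_frontier.notMem_iff_infDist_pos hne).1 hx
      exact (core n hn s hs M u hM L hL (2 * C₀) _ (by positivity) hd x
        (fun y hy => (hloc hne x hd y hy).1) (fun y hy => (hloc hne x hd y hy).2.1)
        (fun y hy => (hloc hne x hd y hy).2.2)).1
    · have hf : frontier Ω = ∅ := Set.not_nonempty_iff_eq_empty.1 hne
      have hr := fun y => hreg y (by simp [hf])
      refine (core n hn s hs M u hM L hL 0 1 le_rfl one_pos x
        (fun y _ => (hr y).1) (fun y _ => (hr y).2.1)
        (fun y _ => ?_)).1
      have := (hr y).2.2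
      simpa [hf] using this
  · intro ϱ hϱ x hx
    have hd : 0 < infDist x (frontier Ω) := hϱ.1.trans_le hx
    have hne : (frontier Ω).Nonempty := by
      by_contra h
      rw [Set.not_nonempty_iff_eq_empty.1 h, infDist_empty] at hd
      exact lt_irrefl _ hd
    refine (core n hn s hs M u hM L hL (2 * C₀) _ (by positivity) hd x
        (fun y hy => (hloc hne x hd y hy).1) (fun y hy => (hloc hne x hd y hy).2.1)
        (fun y hy => (hloc hne x hd y hy).2.2)).2.trans ?_
    have hmono : infDist x (frontier Ω) ^ (-s) ≤ ϱ ^ (-s) :=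
      Real.rpow_le_rpow_of_nonpos hϱ.1 hx (by linarith [hs.1])
    have hpos : 0 < ϱ ^ (-s) := Real.rpow_pos_of_pos hϱ.1 _
    calc _ ≤ |cK n (s / 2)| * ((2 * C₀ + 8 * L) * (ϱ ^ (-s) * ∫ z, kerG n s z)) := by gcongr
      _ = |cK n (s / 2)| * ((2 * C₀ + 8 * L) * ∫ z, kerG n s z) * ϱ ^ (-s) := by ring
      _ ≤ _ := by nlinarith
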